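/- Every 7×11 sign matrix has at most 56 2-neighborly plain travels. (Equivalently, every rank 7 Lawrence oriented matroid on 11 elements has at most c_7(11,2) = 112 2-neighborly reorientations, since each k-neighborly plain travel corresponds to exactly two k-neighborly reorientations.) -/

import Mathlib

/-- An `r × n` sign matrix: entries in `{+1, -1}` (1-indexed: `1 ≤ i ≤ r`, `1 ≤ j ≤ n`). -/
def IsSignMatrix (r n : ℕ) (A : ℕ → ℕ → ℤ) : Prop :=
  ∀ i j, 1 ≤ i → i ≤ r → 1 ≤ j → j ≤ n → A i j = 1 ∨ A i j = -1

/-- `A_S`: the matrix obtained from `A` by negating every entry of each column in `S`. -/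
def reorient (A : ℕ → ℕ → ℤ) (S : Finset ℕ) : ℕ → ℕ → ℤ :=
  fun i j => if j ∈ S then -A i j else A i j

/-- The first column `c'` with `c < c' ≤ n` where row `i` changes sign relative to
entry `a_{i,c}`, if such a column exists. -/
def rowChange (A : ℕ → ℕ → ℤ) (n i c : ℕ) : Option ℕ :=
  (List.range (n + 1)).find? fun c' => decide (c < c' ∧ A i c' ≠ A i c)

/-- `ttEntry A n i` is the column at which the top travel of `A` enters row `i`
(rows and columns 1-indexed): the travel enters row 1 at column 1, and, having entered
row `i` at column `c`, it enters row `i+1` at the first sign change of row `i` after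
column `c` (if any).  The value `some` at the "virtual" row `r+1` means the top travel
had a sign change in the bottom row `r`, i.e. the top travel is positive. -/
def ttEntry (A : ℕ → ℕ → ℤ) (n : ℕ) : ℕ → Option ℕ
  | 0 => none
  | 1 => some 1
  | i + 2 => (ttEntry A n (i + 1)).bind (rowChange A n (i + 1))

/-- The top travel of the `r × n` sign matrix `A` is positive: it contains two
horizontally consecutive entries of row `r` with opposite signs. -/
def ttPositive (A : ℕ → ℕ → ℤ) (r n : ℕ) : Prop :=
  (ttEntry A n (r + 1)).isSome

/-- `A` is `k`-neighborly: for every set `S` of at most `k` columns, the top travel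
of `A_S` is not positive. -/
def IsNeighborly (A : ℕ → ℕ → ℤ) (r n k : ℕ) : Prop :=
  ∀ S : Finset ℕ, S ⊆ Finset.Icc 1 n → S.card ≤ k → ¬ ttPositive (reorient A S) r n

/-- A plain travel of an `r × n` sign matrix, identified with the set `D` of columns of
its downward (vertical) moves: the columns `2 ≤ j₁ < ⋯ < j_{s-1} ≤ n` with `s ≤ r`. -/
def IsPlainTravel (r n : ℕ) (D : Finset ℕ) : Prop :=
  D ⊆ Finset.Icc 2 n ∧ D.card ≤ r - 1

/-- The top travel of `A` follows exactly the plain travel with downward-move columns `D`: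
it makes its downward moves precisely at the columns of `D` (entering rows `2, …, |D|+1`
there) and then ends at column `n` in row `|D|+1` without a further sign change. -/
def ttFollows (A : ℕ → ℕ → ℤ) (n : ℕ) (D : Finset ℕ) : Prop :=
  ttEntry A n (D.card + 2) = none ∧
  ∀ c, c ∈ D ↔ ∃ i, 2 ≤ i ∧ i ≤ D.card + 1 ∧ ttEntry A n i = some c

/-- The plain travel `D` of `A` is `k`-neighborly: there is a set `R` of columns such that
the top travel of `A_R` follows exactly the path `D` and `A_R` is a `k`-neighborly matrix. -/
def IsNeighborlyTravel (A : ℕ → ℕ → ℤ) (r n k : ℕ) (D : Finset ℕ) : Prop :=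
  ∃ R : Finset ℕ, R ⊆ Finset.Icc 1 n ∧ ttFollows (reorient A R) n D ∧
    IsNeighborly (reorient A R) r n k

/-!
The circuits of the oriented matroid of an `r × n` sign matrix `B` are the sets of `r + 1` columns.
Along a circuit `c 0 < ⋯ < c r`, split the columns by their phases, so that negating either part
makes row `j + 1` change sign between `c j` and `c (j + 1)` for every `j`. The top travel is then
positive, so if `B` is `k`-neighborly, both parts have more than `k` columns.

For `r = 7`, `n = 11`, a reorientation of `A` up to a global sign is determined by the word of its
`10` column signs, and neighborly travels inject into such words. The phases of a reorientation
depend only on its word and on the relative sign changes of `A`, which are invariant under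
reorientation. A binary search tree over `13` of these relative changes, carrying the surviving
words as a truth table of `2 ^ 10` bits, shows that at most `56` words have at least three columns
of each phase on every circuit.
-/

section Circuits

variable {r n k : ℕ} {B : ℕ → ℕ → ℤ} {c : ℕ → ℕ}

/-- The supports of the signed circuits of the oriented matroid of an `r × n` sign matrix: the
`(r + 1)`-sets of columns `c 0 < ⋯ < c r`. -/
structure IsCircuit (r n : ℕ) (c : ℕ → ℕ) : Prop where
  strictMonoOn : StrictMonoOn c (Set.Iic r)
  mapsTo : Set.MapsTo c (Set.Iic r) (Set.Icc 1 n)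

theorem exists_rowChange_eq_some {i t c c' : ℕ} (htc : t ≤ c) (hcc' : c < c') (hn : c' ≤ n)
    (hne : B i c ≠ B i c') : ∃ t' ≤ c', rowChange B n i t = some t' := by
  obtain ⟨b, hb, htb, hbt⟩ : ∃ b ≤ c', t < b ∧ B i b ≠ B i t := by
    by_cases h : B i c' = B i t
    · have hct : B i c ≠ B i t := h ▸ hne
      exact ⟨c, hcc'.le, htc.lt_of_ne fun h => hct (h ▸ rfl), hct⟩
    · exact ⟨c', le_rfl, htc.trans_lt hcc', h⟩
  have hsome : (rowChange B n i t).isSome :=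
    List.find?_isSome.2 ⟨b, List.mem_range.2 (by omega), decide_eq_true ⟨htb, hbt⟩⟩
  obtain ⟨t', ht'⟩ := Option.isSome_iff_exists.1 hsome
  refine ⟨t', ?_, ht'⟩
  by_contra! hlt
  have := (List.find?_range_eq_some.1 ht').2.2 b (hb.trans_lt hlt)
  simp_all

theorem ttPositive_of_alternating (hc : IsCircuit r n c)
    (halt : ∀ i < r, B (i + 1) (c i) ≠ B (i + 1) (c (i + 1))) : ttPositive B r n := by
  have hentry : ∀ i ≤ r, ∃ t ≤ c i, ttEntry B n (i + 1) = some t := by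
    intro i hi
    induction i with
    | zero => exact ⟨1, (hc.mapsTo (Set.mem_Iic.2 hi)).1, rfl⟩
    | succ i ih =>
      obtain ⟨t, htc, ht⟩ := ih (by omega)
      obtain ⟨t', ht'c, ht'⟩ := exists_rowChange_eq_some htc
        (hc.strictMonoOn (Set.mem_Iic.2 (by omega)) (Set.mem_Iic.2 hi) i.lt_succ_self)
        (hc.mapsTo (Set.mem_Iic.2 hi)).2 (halt i (by omega))
      exact ⟨t', ht'c, by rw [ttEntry, ht, Option.bind_some, ht']⟩
  obtain ⟨t, -, ht⟩ := hentry r le_rfl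
  exact Option.isSome_iff_exists.2 ⟨t, ht⟩

/-- `f` records the phases of `B` along the circuit `c`: negating the columns `c j` with `f j`
true, or those with `f j` false, makes every row `j + 1` change sign between `c j` and
`c (j + 1)`. -/
def IsPhase (B : ℕ → ℕ → ℤ) (r : ℕ) (c : ℕ → ℕ) (f : ℕ → Bool) : Prop :=
  ∀ j < r, (f j ≠ f (j + 1) ↔ B (j + 1) (c j) = B (j + 1) (c (j + 1)))

theorem IsSignMatrix.reorient_ne (hB : IsSignMatrix r n B) {S : Finset ℕ} {i c c' : ℕ}
    (hi : i ∈ Set.Icc 1 r) (hc : c ∈ Set.Icc 1 n) (hc' : c' ∈ Set.Icc 1 n)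
    (h : ¬(c ∈ S ↔ c' ∈ S) ↔ B i c = B i c') : reorient B S i c ≠ reorient B S i c' := by
  unfold reorient
  rcases hB i c hi.1 hi.2 hc.1 hc.2 with hsc | hsc <;>
  rcases hB i c' hi.1 hi.2 hc'.1 hc'.2 with hsc' | hsc' <;>
  grind

theorem IsNeighborly.lt_count_phase (hB : IsSignMatrix r n B) (h : IsNeighborly B r n k)
    (hc : IsCircuit r n c) {f : ℕ → Bool} (hf : IsPhase B r c f) (t : Bool) :
    k < Nat.count (fun j => f j = t) (r + 1) := by
  by_contra! hcount
  set J := (Finset.range (r + 1)).filter fun j => f j = t with hJ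
  have hcardJ : J.card ≤ k := by rwa [hJ, ← Nat.count_eq_card_filter_range]
  have hmem {j : ℕ} (hj : j ≤ r) : c j ∈ J.image c ↔ f j = t := by
    constructor
    · rintro h
      obtain ⟨i, hi, hij⟩ := Finset.mem_image.1 h
      obtain ⟨hir, hit⟩ := Finset.mem_filter.1 hi
      rwa [← hc.strictMonoOn.injOn (Set.mem_Iic.2 (Finset.mem_range_succ_iff.1 hir)) hj hij]
    · exact fun h => Finset.mem_image_of_mem c (by simpa [hJ, Nat.lt_succ_iff] using ⟨hj, h⟩)
  refine h (J.image c) ?_ (Finset.card_image_le.trans hcardJ)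
    (ttPositive_of_alternating hc fun j hj => ?_)
  · intro x hx
    obtain ⟨j, hj, rfl⟩ := Finset.mem_image.1 hx
    have hjr := Finset.mem_range_succ_iff.1 (Finset.mem_filter.1 hj).1
    exact Finset.mem_Icc.2 (hc.mapsTo (Set.mem_Iic.2 hjr))
  · refine hB.reorient_ne ⟨by omega, hj⟩ (hc.mapsTo (Set.mem_Iic.2 hj.le))
      (hc.mapsTo (Set.mem_Iic.2 hj)) ?_
    rw [hmem hj.le, hmem hj, ← hf j hj]
    cases f j <;> cases f (j + 1) <;> cases t <;> decide

end Circuits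

section Travels

variable {r n : ℕ} {A B B' : ℕ → ℕ → ℤ}

theorem mem_Icc_of_ttEntry_eq_some {i c : ℕ} (hn : 1 ≤ n) (h : ttEntry B n i = some c) :
    c ∈ Set.Icc 1 n := by
  match i with
  | 0 => cases h
  | 1 =>
    obtain rfl : 1 = c := Option.some.inj h
    exact ⟨le_rfl, hn⟩
  | i + 2 =>
    obtain ⟨t, -, ht⟩ := Option.bind_eq_some_iff.1 h
    obtain ⟨hp, hc, -⟩ := List.find?_range_eq_some.1 ht
    have htc := (of_decide_eq_true hp).1
    exact ⟨by omega, Nat.lt_succ_iff.1 (List.mem_range.1 hc)⟩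

theorem ttEntry_congr (hn : 1 ≤ n)
    (h : ∀ i ∈ Set.Icc 1 r, ∀ c ∈ Set.Icc 1 n, ∀ c' ∈ Set.Icc 1 n,
      (B i c = B i c' ↔ B' i c = B' i c')) :
    ∀ i ≤ r + 1, ttEntry B n i = ttEntry B' n i
  | 0, _ | 1, _ => rfl
  | i + 2, hi => by
    rw [ttEntry, ttEntry, ← ttEntry_congr hn h (i + 1) (by omega)]
    refine Option.bind_congr fun t ht => List.find?_congr fun c hc => ?_
    have htn := mem_Icc_of_ttEntry_eq_some hn ht
    have hcn : c ≤ n := Nat.lt_succ_iff.1 (List.mem_range.1 hc)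
    refine decide_eq_decide.2 (and_congr_right fun htc => not_congr ?_)
    exact h _ ⟨by omega, by omega⟩ c ⟨by omega, hcn⟩ t htn

theorem ttEntry_eq_none_of_le {i i' : ℕ} (hi : 1 ≤ i) (hii' : i ≤ i') (h : ttEntry B n i = none) :
    ttEntry B n i' = none := by
  induction i', hii' using Nat.le_induction with
  | base => exact h
  | succ j hij ih =>
    obtain ⟨j, rfl⟩ := Nat.exists_eq_add_of_le' (hi.trans hij)
    rw [ttEntry, ih, Option.bind_none]

theorem ttFollows.mem_iff {D : Finset ℕ} (hD : D.card + 1 ≤ r) (h : ttFollows B n D) (c : ℕ) :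
    c ∈ D ↔ ∃ i ∈ Set.Icc 2 (r + 1), ttEntry B n i = some c := by
  rw [h.2 c]
  constructor
  · rintro ⟨i, h2, hi, hic⟩
    exact ⟨i, ⟨h2, by omega⟩, hic⟩
  · rintro ⟨i, ⟨h2, -⟩, hic⟩
    refine ⟨i, h2, ?_, hic⟩
    by_contra! hlt
    rw [ttEntry_eq_none_of_le (by omega) hlt h.1] at hic
    cases hic

theorem ttFollows.unique {D D' : Finset ℕ} (hn : 1 ≤ n) (hD : D.card + 1 ≤ r)
    (hD' : D'.card + 1 ≤ r) (hB : ttFollows B n D) (hB' : ttFollows B' n D')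
    (h : ∀ i ∈ Set.Icc 1 r, ∀ c ∈ Set.Icc 1 n, ∀ c' ∈ Set.Icc 1 n,
      (B i c = B i c' ↔ B' i c = B' i c')) : D = D' := by
  ext c
  rw [hB.mem_iff hD, hB'.mem_iff hD']
  refine exists_congr fun i => and_congr_right fun hi => ?_
  rw [ttEntry_congr hn h i hi.2]

end Travels

section Reorientation

variable {r n : ℕ} {A B : ℕ → ℕ → ℤ}

/-- Whether row `i` of `B` has different entries in columns `c` and `c'`. -/
def signChange (B : ℕ → ℕ → ℤ) (i c c' : ℕ) : Bool := decide (B i c ≠ B i c')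

/-- The sign of column `c` relative to column `1`, obtained by comparing the columns `b` and
`b + 1` in row `g b`. It identifies a reorientation class up to a global sign. -/
def columnSign (g : ℕ → ℕ) (B : ℕ → ℕ → ℤ) : ℕ → Bool
  | 0 | 1 => false
  | b + 2 => columnSign g B (b + 1) ^^ signChange B (g (b + 1)) (b + 1) (b + 2)

/-- The sign change of row `i` between the columns `b` and `b + 1`, relative to that of row `g b`;
it is invariant under reorientation. -/
def relativeChange (g : ℕ → ℕ) (B : ℕ → ℕ → ℤ) (i b : ℕ) : Bool :=
  signChange B i b (b + 1) ^^ signChange B (g b) b (b + 1)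

theorem signChange_eq_false_iff {i c c' : ℕ} : signChange B i c c' = false ↔ B i c = B i c' := by
  rw [signChange, decide_eq_false_iff_not, not_not]

theorem isSignMatrix_reorient (hA : IsSignMatrix r n A) (R : Finset ℕ) :
    IsSignMatrix r n (reorient A R) := by
  intro i j hi hir hj hjn
  have := hA i j hi hir hj hjn
  unfold reorient
  grind

theorem IsSignMatrix.signChange_xor (hB : IsSignMatrix r n B) {i c c' c'' : ℕ}
    (hi : i ∈ Set.Icc 1 r) (hc : c ∈ Set.Icc 1 n) (hc' : c' ∈ Set.Icc 1 n)
    (hc'' : c'' ∈ Set.Icc 1 n) :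
    (signChange B i c c' ^^ signChange B i c' c'') = signChange B i c c'' := by
  rcases hB i c hi.1 hi.2 hc.1 hc.2 with h | h <;>
  rcases hB i c' hi.1 hi.2 hc'.1 hc'.2 with h' | h' <;>
  rcases hB i c'' hi.1 hi.2 hc''.1 hc''.2 with h'' | h'' <;>
  simp [signChange, h, h', h'']

theorem IsSignMatrix.signChange_reorient (hA : IsSignMatrix r n A) (R : Finset ℕ) {i c c' : ℕ}
    (hi : i ∈ Set.Icc 1 r) (hc : c ∈ Set.Icc 1 n) (hc' : c' ∈ Set.Icc 1 n) :
    signChange (reorient A R) i c c' =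
      (signChange A i c c' ^^ (decide (c ∈ R) ^^ decide (c' ∈ R))) := by
  rcases hA i c hi.1 hi.2 hc.1 hc.2 with h | h <;>
  rcases hA i c' hi.1 hi.2 hc'.1 hc'.2 with h' | h' <;>
  by_cases hR : c ∈ R <;> by_cases hR' : c' ∈ R <;>
  simp [signChange, reorient, h, h', hR, hR']

variable {g : ℕ → ℕ} (hg : ∀ b, 1 ≤ b → b < n → g b ∈ Set.Icc 1 r)

include hg

theorem IsSignMatrix.relativeChange_reorient (hA : IsSignMatrix r n A) (R : Finset ℕ) {i b : ℕ}
    (hi : i ∈ Set.Icc 1 r) (hb : 1 ≤ b) (hbn : b < n) :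
    relativeChange g (reorient A R) i b = relativeChange g A i b := by
  have hbc : b ∈ Set.Icc 1 n := ⟨hb, hbn.le⟩
  have hbc' : b + 1 ∈ Set.Icc 1 n := ⟨by omega, hbn⟩
  rw [relativeChange, relativeChange, hA.signChange_reorient R hi hbc hbc',
    hA.signChange_reorient R (hg b hb hbn) hbc hbc']
  grind

theorem IsSignMatrix.columnSign_reorient (hA : IsSignMatrix r n A) (R : Finset ℕ) {c : ℕ}
    (hc : 1 ≤ c) (hcn : c ≤ n) :
    columnSign g (reorient A R) c =
      (columnSign g A c ^^ (decide (1 ∈ R) ^^ decide (c ∈ R))) := by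
  induction c, hc using Nat.le_induction with
  | base => simp [columnSign]
  | succ b hb ih =>
    obtain ⟨a, rfl⟩ := Nat.exists_eq_add_of_le' hb
    rw [columnSign, columnSign, ih (by omega), hA.signChange_reorient R (hg _ hb hcn)
      ⟨hb, by omega⟩ ⟨by omega, hcn⟩]
    grind

theorem IsSignMatrix.reorient_eq_iff_of_columnSign_eq (hA : IsSignMatrix r n A) {R R' : Finset ℕ}
    (h : ∀ c ∈ Set.Icc 1 n,
      columnSign g (reorient A R) c = columnSign g (reorient A R') c) {i c c' : ℕ}
    (hi : i ∈ Set.Icc 1 r) (hc : c ∈ Set.Icc 1 n) (hc' : c' ∈ Set.Icc 1 n) :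
    reorient A R i c = reorient A R i c' ↔ reorient A R' i c = reorient A R' i c' := by
  have hcol := h c hc
  have hcol' := h c' hc'
  rw [hA.columnSign_reorient hg R hc.1 hc.2, hA.columnSign_reorient hg R' hc.1 hc.2] at hcol
  rw [hA.columnSign_reorient hg R hc'.1 hc'.2, hA.columnSign_reorient hg R' hc'.1 hc'.2] at hcol'
  have hchange : signChange (reorient A R) i c c' = signChange (reorient A R') i c c' := by
    rw [hA.signChange_reorient R hi hc hc', hA.signChange_reorient R' hi hc hc']
    grind
  rw [← signChange_eq_false_iff, hchange, signChange_eq_false_iff]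

omit hg

theorem IsSignMatrix.foldl_xor_relativeChange (hB : IsSignMatrix r n B) (x : Bool) {i c c' : ℕ}
    (hi : i ∈ Set.Icc 1 r) (hc : 1 ≤ c) (hcc' : c ≤ c') (hc' : c' ≤ n) :
    (List.range' c (c' - c)).foldl (fun x b => x ^^ relativeChange g B i b) x =
      (x ^^ (signChange B i c c' ^^ (columnSign g B c ^^ columnSign g B c'))) := by
  induction c', hcc' using Nat.le_induction with
  | base => simp [signChange]
  | succ b hb ih =>
    have hsplit := hB.signChange_xor hi (c := c) (c' := b) (c'' := b + 1) ⟨hc, by omega⟩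
      ⟨by omega, by omega⟩ ⟨by omega, hc'⟩
    obtain ⟨a, rfl⟩ := Nat.exists_eq_add_of_le' (hc.trans hb)
    rw [Nat.sub_add_comm hb, List.range'_1_concat, List.foldl_append, ih (by omega), ← hsplit,
      Nat.add_sub_cancel' hb, List.foldl_cons, List.foldl_nil, relativeChange, columnSign]
    simp only [Bool.xor_assoc, Bool.xor_comm, Bool.xor_left_comm]

end Reorientation

section Tally

theorem countP_eq_count_getD {α : Type*} (p : α → Prop) [DecidablePred p] (a : α) (l : List α) :
    l.countP p = Nat.count (fun j => p (l.getD j a)) l.length := by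
  induction l with
  | nil => rfl
  | cons x l ih => simp [List.countP_cons, Nat.count_succ', ih]

/-- A bitwise counter: at each bit position, the numbers `ones`, `twos` and `fours` hold the binary
digits of a count modulo `8`. -/
structure Tally where
  ones : ℕ
  twos : ℕ
  fours : ℕ

namespace Tally

/-- Increments the count at the positions of the bits of `x`. -/
def add (s : Tally) (x : ℕ) : Tally where
  ones := s.ones ^^^ x
  twos := s.twos ^^^ (s.ones &&& x)
  fours := s.fours ^^^ (s.twos &&& (s.ones &&& x))

/-- The positions whose count is `3`, `4` or `5`. -/
def middle (s : Tally) : ℕ := (s.twos ^^^ s.fours) &&& (s.ones ||| s.fours)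

/-- The count at the position `w`. -/
def count (s : Tally) (w : ℕ) : ℕ :=
  (s.ones.testBit w).toNat + 2 * (s.twos.testBit w).toNat + 4 * (s.fours.testBit w).toNat

theorem count_add (s : Tally) (x w : ℕ) :
    (s.add x).count w = (s.count w + (x.testBit w).toNat) % 8 := by
  simp only [count, add, Nat.testBit_xor, Nat.testBit_and]
  cases s.ones.testBit w <;> cases s.twos.testBit w <;> cases s.fours.testBit w <;>
    cases x.testBit w <;> rfl

theorem count_foldl_add (xs : List ℕ) (s : Tally) (w : ℕ) :
    (xs.foldl add s).count w ≡ s.count w + xs.countP (·.testBit w) [MOD 8] := by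
  induction xs generalizing s with
  | nil => rfl
  | cons x xs ih =>
    refine (ih (s.add x)).trans ?_
    rw [count_add, List.countP_cons, Nat.ModEq, Nat.mod_add_mod]
    cases x.testBit w <;> simp [Nat.add_assoc, Nat.add_comm 1]

theorem testBit_middle (s : Tally) (w : ℕ) :
    s.middle.testBit w ↔ 3 ≤ s.count w ∧ s.count w ≤ 5 := by
  simp only [count, middle, Nat.testBit_xor, Nat.testBit_and, Nat.testBit_or]
  cases s.ones.testBit w <;> cases s.twos.testBit w <;> cases s.fours.testBit w <;> simp

theorem count_lt (s : Tally) (w : ℕ) : s.count w < 8 := by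
  have := Bool.toNat_lt (s.ones.testBit w)
  have := Bool.toNat_lt (s.twos.testBit w)
  have := Bool.toNat_lt (s.fours.testBit w)
  rw [count]
  omega

end Tally

theorem testBit_middle_foldl_add {xs : List ℕ} (hlen : xs.length = 8) {w : ℕ}
    (h : ∀ t, 2 < xs.countP fun x => x.testBit w = t) :
    (xs.foldl Tally.add ⟨0, 0, 0⟩).middle.testBit w := by
  set s := xs.foldl Tally.add ⟨0, 0, 0⟩
  have hcount : s.count w ≡ xs.countP (·.testBit w) [MOD 8] := by
    simpa [Tally.count] using Tally.count_foldl_add xs ⟨0, 0, 0⟩ w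
  have hlt := s.count_lt w
  have hsplit := List.length_eq_countP_add_countP (·.testBit w) (l := xs)
  have htrue := h true
  have hfalse := h false
  simp only [Bool.decide_eq_true, Bool.not_eq_true] at hsplit htrue
  rw [Tally.testBit_middle]
  rw [Nat.ModEq] at hcount
  omega

end Tally

section ClearLowest

/-- Erases the lowest binary digit `1` of `G`. -/
def clearLowest (G : ℕ) : ℕ := G &&& (G - 1)

theorem exists_forall_testBit_clearLowest (G : ℕ) :
    ∃ b, ∀ w ≠ b, G.testBit w → (clearLowest G).testBit w := by
  obtain rfl | hG := eq_or_ne G 0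
  · simp
  obtain ⟨b, o, ⟨a, rfl⟩, rfl⟩ := Nat.exists_eq_two_pow_mul_odd hG
  have hpred : 2 ^ b * (2 * a + 1) - 1 = 2 ^ (b + 1) * a + (2 ^ b - 1) := by
    have := Nat.two_pow_pos b
    rw [Nat.mul_add_one, pow_succ, Nat.mul_assoc]
    omega
  have hlt : 2 ^ b - 1 < 2 ^ (b + 1) :=
    (Nat.sub_le _ _).trans_lt (Nat.pow_lt_pow_succ (by decide))
  refine ⟨b, fun w hw h => ?_⟩
  rw [clearLowest, Nat.testBit_and, h, Bool.true_and, hpred, Nat.testBit_two_pow_mul_add a hlt]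
  rw [Nat.testBit_two_pow_mul] at h
  obtain ⟨hbw, hbit⟩ := Bool.and_eq_true_iff.1 h
  have hbw : b < w := lt_of_le_of_ne (of_decide_eq_true hbw) hw.symm
  rw [if_neg (by omega)]
  rwa [show w - b = w - (b + 1) + 1 by omega, Nat.testBit_succ,
    show (2 * a + 1) / 2 = a by omega] at hbit

theorem card_le_of_clearLowest_iterate_eq_zero {n G : ℕ} {W : Finset ℕ}
    (hW : ∀ w ∈ W, G.testBit w) (h : clearLowest^[n] G = 0) : W.card ≤ n := by
  induction n generalizing G W with
  | zero =>
    obtain rfl : G = 0 := h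
    simpa [Finset.eq_empty_iff_forall_notMem] using hW
  | succ n ih =>
    obtain ⟨b, hb⟩ := exists_forall_testBit_clearLowest G
    have hcard : (W.erase b).card ≤ n := ih (fun w hw =>
      hb w (Finset.ne_of_mem_erase hw) (hW w (Finset.mem_of_mem_erase hw))) h
    have := Finset.pred_card_le_card_erase (s := W) (a := b)
    omega

end ClearLowest

section PhaseTables

/-- The truth table of the constant `true` on the words `w < 1024`. -/
def allWords : ℕ := 2 ^ 1024 - 1

/-- The truth table of the column sign at `c`, as a function of the word `w < 1024` whose bit `j` is
the sign of column `j + 2`; column `1` has sign `false`. -/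
def columnTable (c : ℕ) : ℕ := Nat.ofBits fun w : Fin 1024 => (w.val <<< 2).testBit c

/-- The order in which the search guesses the relative changes: the entry in row `i` and column `b`
belongs to `relativeChange gaugeRow A i b`. The entries `0` mark the gauge rows, where this is
`false`; the cells marked `14` are not guessed. -/
def searchOrder : List (List ℕ) := [
  [0, 0, 13, 14, 14, 14, 14, 14, 14, 14],
  [14, 3, 0, 5, 14, 14, 14, 14, 14, 14],
  [14, 14, 7, 0, 4, 12, 14, 14, 14, 14],
  [14, 14, 14, 9, 0, 1, 10, 14, 14, 14],
  [14, 14, 14, 14, 11, 0, 0, 6, 14, 14],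
  [14, 14, 14, 14, 14, 14, 8, 0, 2, 14],
  [14, 14, 14, 14, 14, 14, 14, 14, 0, 0]]

/-- The row that `searchOrder` marks as the gauge row between the columns `b` and `b + 1`. -/
def gaugeRow (b : ℕ) : ℕ := (searchOrder.map (·.getD (b - 1) 14)).idxOf 0 + 1

/-- The entry of `searchOrder` for the (1-indexed) row `i` and column `b`. -/
def cellIndex (i b : ℕ) : ℕ := (searchOrder.getD (i - 1) []).getD (b - 1) 14

/-- The truth table of the guess `m` for the relative change in row `i` at `b`. -/
def cellTable (m i b : ℕ) : ℕ := bif m.testBit (cellIndex i b) then allWords else 0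

/-- The truth tables of the phases along the columns `cs`, the first of which is compared in row
`i`; `κ` is the difference between the first phase and the first column sign. -/
def phaseTables (m i κ : ℕ) : List ℕ → List ℕ
  | c :: c' :: cs =>
    let κ' := (List.range' c (c' - c)).foldl (fun x b => x ^^^ cellTable m i b) (allWords ^^^ κ)
    (columnTable c ^^^ κ) :: phaseTables m (i + 1) κ' (c' :: cs)
  | [c] => [columnTable c ^^^ κ]
  | [] => []

/-- The indices of the cells that the phases along the columns `cs` depend on. -/
def cellIndices (i : ℕ) : List ℕ → List ℕ
  | c :: c' :: cs => (List.range' c (c' - c)).map (cellIndex i) ++ cellIndices (i + 1) (c' :: cs)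
  | _ => []

theorem gaugeRow_mem : ∀ b, 1 ≤ b → b < 11 → gaugeRow b ∈ Set.Icc 1 7 := by
  simp only [Set.mem_Icc]
  decide +kernel

theorem eq_or_eq_gaugeRow_of_cellIndex_eq : ∀ p ∈ Finset.Icc (1, 1) (7, 10),
    ∀ q ∈ Finset.Icc (1, 1) (7, 10), cellIndex p.1 p.2 = cellIndex q.1 q.2 →
      cellIndex p.1 p.2 ≤ 13 → p = q ∨ p.1 = gaugeRow p.2 ∧ q.1 = gaugeRow q.2 := by
  decide +kernel

theorem testBit_columnTable {c w : ℕ} (hw : w < 1024) :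
    (columnTable c).testBit w = (w <<< 2).testBit c :=
  Nat.testBit_ofBits_lt _ _ hw

theorem testBit_allWords {w : ℕ} (hw : w < 1024) : allWords.testBit w := by
  rw [allWords, Nat.testBit_two_pow_sub_one, decide_eq_true hw]

theorem testBit_cellTable (m i b : ℕ) {w : ℕ} (hw : w < 1024) :
    (cellTable m i b).testBit w = m.testBit (cellIndex i b) := by
  rw [cellTable]
  cases m.testBit (cellIndex i b)
  · exact Nat.zero_testBit w
  · exact testBit_allWords hw

theorem testBit_foldl_cellTable (m i : ℕ) {w : ℕ} (hw : w < 1024) (bs : List ℕ) (x : ℕ) :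
    (bs.foldl (fun x b => x ^^^ cellTable m i b) x).testBit w =
      bs.foldl (fun x b => x ^^ m.testBit (cellIndex i b)) (x.testBit w) := by
  induction bs generalizing x with
  | nil => rfl
  | cons b bs ih =>
    rw [List.foldl_cons, List.foldl_cons, ih, Nat.testBit_xor, testBit_cellTable m i b hw]

@[simp]
theorem length_phaseTables (m i κ : ℕ) (cs : List ℕ) :
    (phaseTables m i κ cs).length = cs.length := by
  fun_induction phaseTables m i κ cs <;> simp_all

theorem getD_phaseTables_zero (m i κ : ℕ) {cs : List ℕ} (hcs : cs ≠ []) :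
    (phaseTables m i κ cs).getD 0 0 = columnTable (cs.getD 0 0) ^^^ κ := by
  match cs with
  | [c] | c :: c' :: cs => rfl

theorem testBit_phaseTables_succ (m i κ : ℕ) {cs : List ℕ} {j : ℕ} (hj : j + 1 < cs.length)
    {w : ℕ} (hw : w < 1024) :
    ((phaseTables m i κ cs).getD (j + 1) 0).testBit w =
      ((columnTable (cs.getD (j + 1) 0)).testBit w ^^
        (List.range' (cs.getD j 0) (cs.getD (j + 1) 0 - cs.getD j 0)).foldl
          (fun x b => x ^^ m.testBit (cellIndex (i + j) b))
          !(((phaseTables m i κ cs).getD j 0).testBit w ^^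
            (columnTable (cs.getD j 0)).testBit w)) := by
  induction cs generalizing i κ j with
  | nil => cases hj
  | cons c cs ih =>
    obtain ⟨c', cs, rfl⟩ := List.exists_cons_of_length_pos
      (Nat.zero_lt_of_lt (Nat.lt_of_succ_lt_succ hj))
    cases j with
    | zero =>
      rw [phaseTables, List.getD_cons_succ, getD_phaseTables_zero _ _ _ (List.cons_ne_nil _ _)]
      simp only [List.getD_cons_zero, List.getD_cons_succ, Nat.testBit_xor, Nat.add_zero,
        testBit_foldl_cellTable m i hw, testBit_allWords hw]
      congr 2
      cases (columnTable c).testBit w <;> simp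
    | succ j =>
      have htail := ih (i + 1)
        ((List.range' c (c' - c)).foldl (fun x b => x ^^^ cellTable m i b) (allWords ^^^ κ))
        (Nat.lt_of_succ_lt_succ hj)
      rw [phaseTables, List.getD_cons_succ, List.getD_cons_succ,
        List.getD_cons_succ (xs := c' :: cs), htail, Nat.add_right_comm, Nat.add_assoc]
      rfl

theorem cellIndex_mem_cellIndices (i : ℕ) {cs : List ℕ} {j b : ℕ} (hj : j + 1 < cs.length)
    (hb : b ∈ Set.Ico (cs.getD j 0) (cs.getD (j + 1) 0)) :
    cellIndex (i + j) b ∈ cellIndices i cs := by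
  induction cs generalizing i j with
  | nil => cases hj
  | cons c cs ih =>
    obtain ⟨c', cs, rfl⟩ := List.exists_cons_of_length_pos
      (Nat.zero_lt_of_lt (Nat.lt_of_succ_lt_succ hj))
    rw [cellIndices, List.mem_append]
    cases j with
    | zero =>
      obtain ⟨hcb, hbc'⟩ : c ≤ b ∧ b < c' := hb
      exact .inl (List.mem_map_of_mem (List.mem_range'_1.2 ⟨hcb, by omega⟩))
    | succ j =>
      rw [← Nat.add_assoc, Nat.add_right_comm]
      exact .inr (ih (i + 1) (Nat.lt_of_succ_lt_succ hj) hb)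

end PhaseTables

section Search

/-- The circuits of a matrix with `7` rows and `11` columns. -/
def circuits : List (List ℕ) := (List.range' 1 11).sublistsLen 8

/-- The circuits whose phases depend on the guess `k`, but on no later one. -/
def circuitsAt (k : ℕ) : List (List ℕ) :=
  circuits.filter fun cs => (cellIndices 1 cs).contains k && (cellIndices 1 cs).all (· ≤ k)

/-- The set of all `v ∈ cellIndices 1 cs`, as a bit mask. -/
def support (cs : List ℕ) : ℕ := (cellIndices 1 cs).foldr (fun v s => 2 ^ v ||| s) 0

/-- The words for which, given the guesses `m`, at least three phases along `cs` are `true` and at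
least three are `false`. -/
def balancedWords (cs : List ℕ) (m : ℕ) : ℕ :=
  ((phaseTables m 1 0 cs).foldl Tally.add ⟨0, 0, 0⟩).middle

/-- `f n`. The case distinction forces `n` to be evaluated before `f n`, so that in the kernel equal
values of `n` share one evaluation of `f n`. -/
def strictApply (f : ℕ → ℕ) : ℕ → ℕ
  | 0 => f 0
  | n + 1 => f (n + 1)

/-- The words of `G` that are balanced on all circuits in `circuitsAt k`, given the guesses `m`. -/
def restrict (k m G : ℕ) : ℕ :=
  (circuitsAt k).foldl (fun G cs => G &&& strictApply (balancedWords cs) (m &&& support cs)) G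

/-- Whether, for every way of continuing the guesses `m` for the cells `1, …, k`, at most `56`
words of `G` remain after at most `d` restrictions. -/
def search : ℕ → ℕ → ℕ → ℕ → Bool
  | 0, _, _, _ => false
  | d + 1, k, m, G =>
    clearLowest^[56] (restrict k m G) == 0 ||
      (search d (k + 1) m (restrict k m G) && search d (k + 1) (m ||| 2 ^ (k + 1)) (restrict k m G))

theorem search_eq_true : search 14 0 0 allWords = true := by
  decide +kernel

theorem strictApply_eq (f : ℕ → ℕ) : ∀ n, strictApply f n = f n
  | 0 | _ + 1 => rfl

theorem testBit_support {cs : List ℕ} {v : ℕ} (hv : v ∈ cellIndices 1 cs) :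
    (support cs).testBit v := by
  rw [support]
  generalize cellIndices 1 cs = vs at hv ⊢
  induction vs with
  | nil => cases hv
  | cons u vs ih =>
    rw [List.foldr_cons, Nat.testBit_or, Nat.testBit_two_pow]
    rcases List.mem_cons.1 hv with rfl | hv
    · simp
    · simp [ih hv]

/-- The word `w` is balanced on every circuit that depends on guessed cells only, when the guesses
are taken from `val`. -/
def IsBalancedWord (val : ℕ → Bool) (w : ℕ) : Prop :=
  ∀ cs ∈ circuits, (∀ v ∈ cellIndices 1 cs, v ≤ 13) →
    ∀ m : ℕ, (∀ v ∈ cellIndices 1 cs, m.testBit v = val v) → (balancedWords cs m).testBit w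

variable {val : ℕ → Bool} {k m G w : ℕ}

theorem IsBalancedWord.testBit_restrict (hw : IsBalancedWord val w) (hk : k ≤ 13)
    (hm : ∀ v, m.testBit v = (decide (v ≤ k) && val v)) (hG : G.testBit w) :
    (restrict k m G).testBit w := by
  have hcircuit : ∀ cs ∈ circuitsAt k,
      (strictApply (balancedWords cs) (m &&& support cs)).testBit w := by
    intro cs hcs
    obtain ⟨hcs, hle⟩ : cs ∈ circuits ∧ ∀ v ∈ cellIndices 1 cs, v ≤ k := by
      simp only [circuitsAt, List.mem_filter, Bool.and_eq_true, List.all_eq_true,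
        decide_eq_true_eq] at hcs
      exact ⟨hcs.1, hcs.2.2⟩
    rw [strictApply_eq]
    refine hw cs hcs (fun v hv => (hle v hv).trans hk) _ fun v hv => ?_
    rw [Nat.testBit_and, testBit_support hv, hm, decide_eq_true (hle v hv), Bool.true_and,
      Bool.and_true]
  rw [restrict]
  generalize circuitsAt k = L at hcircuit ⊢
  induction L generalizing G with
  | nil => exact hG
  | cons cs L ih =>
    refine ih ?_ fun cs' h => hcircuit cs' (List.mem_cons_of_mem _ h)
    rw [Nat.testBit_and, hG, hcircuit cs List.mem_cons_self, Bool.and_true]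

theorem card_le_of_search {W : Finset ℕ} (hW : ∀ w ∈ W, IsBalancedWord val w) {d : ℕ}
    (hdk : d + k ≤ 14) (hm : ∀ v, m.testBit v = (decide (v ≤ k) && val v))
    (hG : ∀ w ∈ W, G.testBit w) (h : search d k m G) : W.card ≤ 56 := by
  induction d generalizing k m G with
  | zero => cases h
  | succ d ih =>
    have hG' : ∀ w ∈ W, (restrict k m G).testBit w := fun w hw =>
      (hW w hw).testBit_restrict (by omega) hm (hG w hw)
    rw [search, Bool.or_eq_true, Bool.and_eq_true, beq_iff_eq] at h
    obtain hzero | ⟨hfalse, htrue⟩ := h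
    · exact card_le_of_clearLowest_iterate_eq_zero hG' hzero
    · cases hval : val (k + 1)
      · refine ih (by omega) (fun v => ?_) hG' hfalse
        grind
      · refine ih (by omega) (fun v => ?_) hG' htrue
        rw [Nat.testBit_or, Nat.testBit_two_pow]
        grind

theorem card_le_of_isBalancedWord {W : Finset ℕ} (hval : val 0 = false)
    (hW : ∀ w ∈ W, w < 1024 ∧ IsBalancedWord val w) : W.card ≤ 56 := by
  refine card_le_of_search (fun w hw => (hW w hw).2) le_rfl (fun v => ?_)
    (fun w hw => testBit_allWords (hW w hw).1) search_eq_true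
  cases v <;> simp [hval]

end Search

section Words

variable {A B : ℕ → ℕ → ℤ} {cs : List ℕ}

/-- The word of the column signs of `B` at the columns `2, …, 11`. -/
def word (B : ℕ → ℕ → ℤ) : ℕ := Nat.ofBits fun j : Fin 10 => columnSign gaugeRow B (j + 2)

theorem word_lt (B : ℕ → ℕ → ℤ) : word B < 1024 := Nat.ofBits_lt_two_pow _

theorem testBit_word_shiftLeft {c : ℕ} (hc : c ∈ Set.Icc 1 11) :
    (word B <<< 2).testBit c = columnSign gaugeRow B c := by
  obtain ⟨h1, h11⟩ := hc
  rw [Nat.testBit_shiftLeft]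
  obtain rfl | h2 := h1.eq_or_lt
  · rfl
  · obtain ⟨j, rfl⟩ := Nat.exists_eq_add_of_le' h2
    rw [word, decide_eq_true (Nat.le_add_left 2 j), Bool.true_and, Nat.add_sub_cancel,
      Nat.testBit_ofBits_lt _ _ (by omega)]

theorem isCircuit_of_mem_circuits (hcs : cs ∈ circuits) :
    cs.length = 8 ∧ IsCircuit 7 11 (cs.getD · 0) := by
  obtain ⟨hsub, hlen⟩ := List.mem_sublistsLen.1 hcs
  have hsorted := List.pairwise_iff_getElem.1
    ((List.pairwise_lt_range' (s := 1) (n := 11)).sublist hsub)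
  have hlt {j : ℕ} (hj : j ∈ Set.Iic 7) : j < cs.length := by
    rw [hlen]; exact Nat.lt_succ_of_le hj
  refine ⟨hlen, fun i hi j hj hij => ?_, fun j hj => ?_⟩
  · simpa [hlt hi, hlt hj] using hsorted i j (hlt hi) (hlt hj) hij
  · have hrange := List.mem_range'_1.1 (hsub.subset (List.getElem_mem (hlt hj)))
    simp only [List.getD_eq_getElem _ _ (hlt hj)]
    exact ⟨hrange.1, Nat.le_of_lt_succ hrange.2⟩

theorem isPhase_phaseTables (hB : IsSignMatrix 7 11 B) (hcs : cs ∈ circuits) {m : ℕ}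
    (hm : ∀ i ∈ Set.Icc 1 7, ∀ b ∈ Set.Icc 1 10, cellIndex i b ∈ cellIndices 1 cs →
      m.testBit (cellIndex i b) = relativeChange gaugeRow B i b) :
    IsPhase B 7 (cs.getD · 0) fun j => ((phaseTables m 1 0 cs).getD j 0).testBit (word B) := by
  intro j hj
  obtain ⟨hlen, hc⟩ := isCircuit_of_mem_circuits hcs
  have hcj := hc.mapsTo (Set.mem_Iic.2 hj.le)
  have hcj' := hc.mapsTo (Set.mem_Iic.2 hj)
  have hle := (hc.strictMonoOn (Set.mem_Iic.2 hj.le) (Set.mem_Iic.2 hj) j.lt_succ_self).le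
  have hrow : j + 1 ∈ Set.Icc 1 7 := ⟨Nat.le_add_left 1 j, hj⟩
  have hguess : ∀ b ∈ List.range' (cs.getD j 0) (cs.getD (j + 1) 0 - cs.getD j 0),
      m.testBit (cellIndex (1 + j) b) = relativeChange gaugeRow B (j + 1) b := by
    intro b hb
    obtain ⟨hjb, hbj⟩ := List.mem_range'_1.1 hb
    rw [Nat.add_sub_cancel' hle] at hbj
    have hmem := cellIndex_mem_cellIndices 1 (by omega : j + 1 < cs.length) ⟨hjb, hbj⟩
    rw [Nat.add_comm] at hmem ⊢
    exact hm _ hrow b ⟨hcj.1.trans hjb, Nat.le_of_lt_succ (hbj.trans_le hcj'.2)⟩ hmem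
  have hsucc := testBit_phaseTables_succ m 1 0 (by omega : j + 1 < cs.length) (word_lt B)
  rw [List.foldl_ext _ _ _ (fun x b hb => congrArg (x ^^ ·) (hguess b hb)),
    hB.foldl_xor_relativeChange _ hrow hcj.1 hle hcj'.2, testBit_columnTable (word_lt B),
    testBit_columnTable (word_lt B), testBit_word_shiftLeft hcj,
    testBit_word_shiftLeft hcj'] at hsucc
  dsimp only
  rw [hsucc, ← signChange_eq_false_iff]
  grind

theorem exists_relativeChange_eq (A : ℕ → ℕ → ℤ) :
    ∃ val : ℕ → Bool, val 0 = false ∧ ∀ i ∈ Set.Icc 1 7, ∀ b ∈ Set.Icc 1 10,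
      cellIndex i b ≤ 13 → relativeChange gaugeRow A i b = val (cellIndex i b) := by
  classical
  have hgauge (p : ℕ × ℕ) (h : p.1 = gaugeRow p.2) : ¬relativeChange gaugeRow A p.1 p.2 := by
    rw [relativeChange, h, Bool.xor_self]
    exact Bool.false_ne_true
  refine ⟨fun v => decide (∃ p : ℕ × ℕ, cellIndex p.1 p.2 = v ∧ p ∈ Finset.Icc (1, 1) (7, 10) ∧
    relativeChange gaugeRow A p.1 p.2), ?_, fun i hi b hb hle => ?_⟩
  · rw [decide_eq_false_iff_not]
    rintro ⟨p, hp0, hp, hchange⟩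
    obtain rfl | h := eq_or_eq_gaugeRow_of_cellIndex_eq p hp (1, 1) (by decide) hp0 (by omega)
    · exact hgauge _ rfl hchange
    · exact hgauge _ h.1 hchange
  · have hib : (i, b) ∈ Finset.Icc (1, 1) (7, 10) :=
      Finset.mem_Icc.2 ⟨⟨hi.1, hb.1⟩, ⟨hi.2, hb.2⟩⟩
    rw [Bool.eq_iff_iff, decide_eq_true_iff]
    refine ⟨fun h => ⟨(i, b), rfl, hib, h⟩, fun ⟨p, hpv, hp, h⟩ => ?_⟩
    obtain rfl | hg := eq_or_eq_gaugeRow_of_cellIndex_eq p hp (i, b) hib hpv (hpv ▸ hle)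
    · exact h
    · exact (hgauge p hg.1 h).elim

theorem IsNeighborly.isBalancedWord {val : ℕ → Bool} (hB : IsSignMatrix 7 11 B)
    (h : IsNeighborly B 7 11 2) (hval : ∀ i ∈ Set.Icc 1 7, ∀ b ∈ Set.Icc 1 10,
      cellIndex i b ≤ 13 → relativeChange gaugeRow B i b = val (cellIndex i b)) :
    IsBalancedWord val (word B) := by
  intro cs hcs hle m hm
  obtain ⟨hlen, hc⟩ := isCircuit_of_mem_circuits hcs
  have hphase := isPhase_phaseTables hB hcs fun i hi b hb hv =>
    (hm _ hv).trans (hval i hi b hb (hle _ hv)).symm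
  have hxs : (phaseTables m 1 0 cs).length = 8 := by rw [length_phaseTables, hlen]
  refine testBit_middle_foldl_add hxs fun t => ?_
  rw [countP_eq_count_getD _ 0, hxs]
  exact h.lt_count_phase hB hc hphase t

theorem columnSign_eq_of_word_eq {B' : ℕ → ℕ → ℤ} (h : word B = word B') :
    ∀ c ∈ Set.Icc 1 11, columnSign gaugeRow B c = columnSign gaugeRow B' c := fun c hc => by
  rw [← testBit_word_shiftLeft hc, h, testBit_word_shiftLeft hc]

end Words

/-- Every 7×11 sign matrix has at most 56 2-neighborly plain travels. -/
theorem statement_13 (A : ℕ → ℕ → ℤ) (hA : IsSignMatrix 7 11 A) :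
    {D : Finset ℕ | IsPlainTravel 7 11 D ∧ IsNeighborlyTravel A 7 11 2 D}.ncard ≤ 56 := by
  classical
  obtain ⟨val, hval0, hval⟩ := exists_relativeChange_eq A
  let W := (Finset.range 1024).filter (IsBalancedWord val)
  have hW : W.card ≤ 56 := card_le_of_isBalancedWord hval0 fun w hw =>
    (Finset.mem_filter.1 hw).imp_left Finset.mem_range.1
  have htravel : ∀ D ∈ {D : Finset ℕ | IsPlainTravel 7 11 D ∧ IsNeighborlyTravel A 7 11 2 D},
    D.card + 1 ≤ 7 ∧ ∃ R, ttFollows (reorient A R) 11 D ∧ word (reorient A R) ∈ W := by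
    rintro D ⟨⟨-, hD⟩, R, -, hfollows, hR⟩
    refine ⟨by omega, R, hfollows, Finset.mem_filter.2 ⟨Finset.mem_range.2 (word_lt _), ?_⟩⟩
    exact hR.isBalancedWord (isSignMatrix_reorient hA R) fun i hi b hb hle =>
      (hA.relativeChange_reorient gaugeRow_mem R hi hb.1 (Nat.lt_succ_of_le hb.2)).trans
        (hval i hi b hb hle)
  choose! hcard R hfollows hmem using htravel
  rw [← Set.ncard_coe_finset] at hW
  refine (Set.ncard_le_ncard_of_injOn (fun D => word (reorient A (R D))) hmem ?_
    W.finite_toSet).trans hW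
  intro D hD D' hD' h
  exact (hfollows D hD).unique (by decide) (hcard D hD) (hcard D' hD') (hfollows D' hD')
    fun i hi c hc c' hc' =>
      hA.reorient_eq_iff_of_columnSign_eq gaugeRow_mem (columnSign_eq_of_word_eq h) hi hc hc'
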